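/- arXiv:math/0701281 — 2 statements merged into one kernel-verified Lean document; each statement's English description precedes it below -/
import Mathlib

section
/- Let p > 1 be a real number, q > 1 an integer, and K > 0 a constant. Then there exists a real number x > 0 with the following property: for every ε > 0 there exists δ > 0 such that for every finite family of positive real numbers λ_1, …, λ_k with sum τ = λ_1 + ⋯ + λ_k satisfying max_i λ_i ≤ 1, τ^p < K · max_i λ_i, min_i λ_i > (max_i λ_i)^q, and max_i λ_i < δ, one has ∑_{i=1}^k λ_i^{1−x} < ε. (In other words, for this x the sums ∑_i λ_i^{1−x} tend to 0 as max_i λ_i → 0 over all such families.) -/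
/-!
Write `M` for the maximum and `τ` for the sum. Since every `λ_i` exceeds `M ^ q`, we have
`λ_i ^ (1 - x) = λ_i * λ_i ^ (-x) ≤ λ_i * M ^ (-q x)`. Summing and using `τ < (K M) ^ (1/p)`,
the sum is less than `K ^ (1/p) * M ^ (1/p - q x)`. Taking `x = 1 / (2 p q)` leaves the positive
exponent `1 / (2 p)` on `M`, so this bound tends to `0` with `M`.
-/

open Finset

theorem stmt_0 (p : ℝ) (hp : 1 < p) (q : ℕ) (hq : 1 < q) (K : ℝ) (hK : 0 < K) :
    ∃ x : ℝ, 0 < x ∧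
      ∀ ε : ℝ, 0 < ε → ∃ δ : ℝ, 0 < δ ∧
        ∀ (k : ℕ) (hk : 0 < k) (lam : Fin k → ℝ)
          (hne : (Finset.univ : Finset (Fin k)).Nonempty),
          (∀ i, 0 < lam i) →
          Finset.univ.sup' hne lam ≤ 1 →
          (∑ i, lam i) ^ p < K * Finset.univ.sup' hne lam →
          (Finset.univ.sup' hne lam) ^ (q : ℝ) < Finset.univ.inf' hne lam →
          Finset.univ.sup' hne lam < δ →
          ∑ i, lam i ^ (1 - x) < ε := by
  have hp0 : 0 < p := by linarith
  have hq0 : (0 : ℝ) < q := by exact_mod_cast (by omega : 0 < q)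
  refine ⟨1 / (2 * p * q), by positivity, fun ε hε => ?_⟩
  have hC : 0 < K ^ (1 / p) := Real.rpow_pos_of_pos hK _
  -- This `δ` is the solution of `K ^ (1 / p) * δ ^ (1 / (2 * p)) = ε`.
  refine ⟨(ε / K ^ (1 / p)) ^ (2 * p), by positivity, ?_⟩
  intro k hk lam hne hpos _ hsum hmin hδ
  set M := Finset.univ.sup' hne lam with hM
  have hM0 : 0 < M := (hpos ⟨0, hk⟩).trans_le (Finset.le_sup' lam (Finset.mem_univ _))
  have hτ0 : 0 ≤ ∑ i, lam i := Finset.sum_nonneg fun i _ => (hpos i).le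
  have hτ : ∑ i, lam i < (K * M) ^ (1 / p) := by
    have h := Real.rpow_lt_rpow (Real.rpow_nonneg hτ0 p) hsum (z := 1 / p) (by positivity)
    rwa [← Real.rpow_mul hτ0, mul_one_div_cancel hp0.ne', Real.rpow_one] at h
  have hterm : ∀ i, lam i ^ (1 - 1 / (2 * p * q)) ≤ lam i * M ^ (-(1 / (2 * p))) := by
    intro i
    have hi : M ^ (q : ℝ) ≤ lam i := hmin.le.trans (Finset.inf'_le lam (Finset.mem_univ i))
    have h := Real.rpow_le_rpow_of_nonpos (z := -(1 / (2 * p * q)))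
      (Real.rpow_pos_of_pos hM0 _) hi (by rw [neg_nonpos]; positivity)
    rw [← Real.rpow_mul hM0.le,
      show (q : ℝ) * -(1 / (2 * p * q)) = -(1 / (2 * p)) by field_simp] at h
    rw [sub_eq_add_neg, Real.rpow_add (hpos i), Real.rpow_one]
    exact mul_le_mul_of_nonneg_left h (hpos i).le
  have hMδ : M ^ (1 / (2 * p)) < ε / K ^ (1 / p) := by
    have h := Real.rpow_lt_rpow hM0.le hδ (z := 1 / (2 * p)) (by positivity)
    rwa [← Real.rpow_mul (by positivity), mul_one_div_cancel (by positivity),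
      Real.rpow_one] at h
  calc ∑ i, lam i ^ (1 - 1 / (2 * p * q))
      ≤ ∑ i, lam i * M ^ (-(1 / (2 * p))) := Finset.sum_le_sum fun i _ => hterm i
    _ = (∑ i, lam i) * M ^ (-(1 / (2 * p))) := by rw [Finset.sum_mul]
    _ < (K * M) ^ (1 / p) * M ^ (-(1 / (2 * p))) :=
        mul_lt_mul_of_pos_right hτ (Real.rpow_pos_of_pos hM0 _)
    _ = K ^ (1 / p) * M ^ (1 / (2 * p)) := by
        rw [Real.mul_rpow hK.le hM0.le, mul_assoc, ← Real.rpow_add hM0]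
        congr 2
        field_simp
        norm_num
    _ < ε := by
        rw [lt_div_iff₀ hC] at hMδ
        linarith
end

section
/- Let d ≥ 1 and n ≥ 0 be integers. There exists a constant C > 0 such that for every τ ∈ (0, 1], every y ∈ ℝ^d, and every x ∈ ℝ^d, the n-th iterated Fréchet derivative of the map x ↦ (2πτ)^{−d/2} · exp(−‖x − y‖² / (2τ)) satisfies ‖iteratedFDeriv^n‖ ≤ C · τ^{−(d + n)/2} (the bound holding at every point x). -/
/-!
By translation and the parabolic scaling `z ↦ τ^(-1/2) • (z - y)`, the heat kernel is
`(2πτ)^(-d/2)` times the unit Gaussian `exp (-‖z‖² / 2)`. Each of the `n` derivatives contributes a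
factor `τ^(-1/2)`, so everything reduces to bounding the `n`-th derivative of the unit Gaussian
uniformly on the whole space (`exists_bound_iteratedFDeriv_gaussian`).

For that bound, the Faà di Bruno estimate applied to `exp ∘ (-‖·‖² / 2)` gives at most
`n! * exp (-‖x‖² / 2) * D(x) ^ n` with `D` of polynomial growth, because every derivative of `exp`
is `exp` and `-‖·‖² / 2` has temperate growth. The Gaussian factor absorbs any power of `1 + ‖x‖`
(`one_add_pow_mul_exp_le`).
-/

lemma one_add_pow_mul_exp_le (m : ℕ) {r : ℝ} (hr : 0 ≤ r) :
    (1 + r) ^ m * Real.exp (-r ^ 2 / 2) ≤ m.factorial * Real.exp (3 / 2) := by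
  have h1 : (1 + r) ^ m ≤ m.factorial * Real.exp (1 + r) := by
    have h := Real.pow_div_factorial_le_exp (1 + r) (by linarith) m
    rwa [div_le_iff₀ (by positivity), mul_comm] at h
  calc (1 + r) ^ m * Real.exp (-r ^ 2 / 2)
      ≤ m.factorial * Real.exp (1 + r) * Real.exp (-r ^ 2 / 2) := by gcongr
    _ = m.factorial * Real.exp (1 + r + -r ^ 2 / 2) := by rw [mul_assoc, ← Real.exp_add]
    _ ≤ m.factorial * Real.exp (3 / 2) := by
        gcongr
        nlinarith [sq_nonneg (r - 1)]

/-- Every derivative of the unit Gaussian on a real inner product space is bounded. -/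
lemma exists_bound_iteratedFDeriv_gaussian {E : Type*} [NormedAddCommGroup E]
    [InnerProductSpace ℝ E] (n : ℕ) :
    ∃ C : ℝ, 0 < C ∧ ∀ x : E,
      ‖iteratedFDeriv ℝ n (fun z : E => Real.exp (-‖z‖ ^ 2 / 2)) x‖ ≤ C := by
  have hf : (fun z : E => -‖z‖ ^ 2 / 2).HasTemperateGrowth := by
    have h := (Function.HasTemperateGrowth.const (E := E) (-1 / 2 : ℝ)).mul
      (Function.hasTemperateGrowth_norm_sq (H := E))
    have heq : (fun z : E => -‖z‖ ^ 2 / 2) =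
        (fun _ : E => (-1 / 2 : ℝ)) * fun z : E => ‖z‖ ^ 2 := by
      ext z
      simp only [Pi.mul_apply]
      ring
    rw [heq]
    exact h
  obtain ⟨k, B, hB, hbound⟩ := hf.norm_iteratedFDeriv_le_uniform n
  refine ⟨n.factorial * (B + 1) ^ n * ((k * n).factorial * Real.exp (3 / 2)), by positivity,
    fun x => ?_⟩
  have hcomp := norm_iteratedFDeriv_comp_le (𝕜 := ℝ) (n := n) (N := n) (g := Real.exp)
    (f := fun z : E => -‖z‖ ^ 2 / 2) Real.contDiff_exp (hf.1.of_le (mod_cast le_top)) le_rfl x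
    (C := Real.exp (-‖x‖ ^ 2 / 2)) (D := (B + 1) * (1 + ‖x‖) ^ k)
    (fun i _ => by
      rw [norm_iteratedFDeriv_eq_norm_iteratedDeriv, iteratedDeriv_eq_iterate,
        Real.iter_deriv_exp, Real.norm_of_nonneg (Real.exp_pos _).le])
    (fun i hi hin => by
      have h1 : 1 ≤ (1 + ‖x‖) ^ k := one_le_pow₀ (by linarith [norm_nonneg x])
      have h2 : 1 ≤ (B + 1) * (1 + ‖x‖) ^ k := by nlinarith
      calc _ ≤ B * (1 + ‖x‖) ^ k := hbound i hin x
        _ ≤ (B + 1) * (1 + ‖x‖) ^ k := by gcongr; linarith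
        _ ≤ _ := le_self_pow₀ h2 (by omega))
  calc _ ≤ _ := hcomp
    _ = n.factorial * (B + 1) ^ n * ((1 + ‖x‖) ^ (k * n) * Real.exp (-‖x‖ ^ 2 / 2)) := by
        rw [mul_pow, ← pow_mul]; ring
    _ ≤ _ := by
        exact mul_le_mul_of_nonneg_left (one_add_pow_mul_exp_le _ (norm_nonneg x))
          (by positivity)

theorem stmt_8 (d : ℕ) (hd : 1 ≤ d) (n : ℕ) :
    ∃ C : ℝ, 0 < C ∧
      ∀ τ ∈ Set.Ioc (0 : ℝ) 1, ∀ y x : EuclideanSpace ℝ (Fin d),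
        ‖iteratedFDeriv ℝ n
            (fun z : EuclideanSpace ℝ (Fin d) =>
              (2 * Real.pi * τ) ^ (-(d : ℝ) / 2) * Real.exp (-‖z - y‖ ^ 2 / (2 * τ))) x‖ ≤
          C * τ ^ (-((d : ℝ) + (n : ℝ)) / 2) := by
  obtain ⟨C, hC, hbound⟩ :=
    exists_bound_iteratedFDeriv_gaussian (E := EuclideanSpace ℝ (Fin d)) n
  refine ⟨(2 * Real.pi) ^ (-(d : ℝ) / 2) * C, by positivity, ?_⟩
  rintro τ ⟨hτ, -⟩ y x
  set G : EuclideanSpace ℝ (Fin d) → ℝ := fun z => Real.exp (-‖z‖ ^ 2 / 2) with hG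
  have hGs : ContDiff ℝ n G :=
    Real.contDiff_exp.comp ((contDiff_norm_sq ℝ).neg.div_const 2)
  set a : ℝ := τ ^ (-(1 : ℝ) / 2) with ha
  set c : ℝ := (2 * Real.pi * τ) ^ (-(d : ℝ) / 2) with hc
  have ha0 : 0 < a := by positivity
  have ha2 : a ^ 2 = τ⁻¹ := by
    rw [ha, ← Real.rpow_natCast, ← Real.rpow_mul hτ.le, ← Real.rpow_neg_one]
    norm_num
  have hfun : (fun z : EuclideanSpace ℝ (Fin d) => c * Real.exp (-‖z - y‖ ^ 2 / (2 * τ))) =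
      fun z => (fun w => c • G (a • w)) (z - y) := by
    ext z
    simp only [hG, smul_eq_mul, norm_smul, Real.norm_of_nonneg ha0.le, mul_pow, ha2]
    congr 2
    field_simp
  have hGa : ContDiff ℝ n (fun w => G (a • w)) := hGs.comp (contDiff_const_smul a)
  rw [hfun, iteratedFDeriv_comp_sub (f := fun w => c • G (a • w)),
    iteratedFDeriv_const_smul_apply' hGa.contDiffAt, iteratedFDeriv_comp_const_smul a hGs,
    norm_smul, norm_smul, Real.norm_of_nonneg (by positivity : 0 ≤ c),
    Real.norm_of_nonneg (by positivity : 0 ≤ a ^ n)]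
  have hscale : τ ^ (-(d : ℝ) / 2) * a ^ n = τ ^ (-((d : ℝ) + (n : ℝ)) / 2) := by
    rw [ha, ← Real.rpow_natCast, ← Real.rpow_mul hτ.le, ← Real.rpow_add hτ]
    congr 1
    ring
  calc c * (a ^ n * ‖iteratedFDeriv ℝ n G (a • (x - y))‖) ≤ c * (a ^ n * C) := by
        gcongr
        exact hbound _
    _ = (2 * Real.pi) ^ (-(d : ℝ) / 2) * C * τ ^ (-((d : ℝ) + (n : ℝ)) / 2) := by
        rw [← hscale, hc, Real.mul_rpow (by positivity) hτ.le]
        ring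
end
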